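/- Let G be a connected non-bipartite simple graph and let x be a first Q-eigenvector of G. Let T be a branch of G with root u which is a tree and which is nonzero with respect to x (x does not vanish identically on T). Then for any two distinct vertices p, q of T such that q lies on the unique path in T from u to p, one has |x(q)| < |x(p)|. -/

import Mathlib

/-!
Write `q = qmin G`. Twice the quadratic form of `Q(G)` is the sum of `(x v + x w) ^ 2` over ordered
adjacent pairs, so `Q(G)` is positive semidefinite, and `q > 0` because `q = 0` would force
`x v = - x w` along every edge and hence a 2-colouring of `G` by signs.

The branch `S` is a tree, hence has a proper sign function `σ`; normalise it so that
`x u = σ u * |x u|`. Replacing `x` on `S` by `σ * |x|` changes neither the norm nor the value at `u`,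
and does not increase the quadratic form (`(|a| - |b|)² ≤ (a + b)²`). By the variational
characterisation of `q` the new vector is again a first eigenvector (`isEigen_switch`), so
`∑_{w ~ v} (|x v| - |x w|) = q |x v|` for every `v ∈ S` other than the root (`sum_abs_sub_eq`).

If `x` vanishes at a vertex of `S`, it vanishes at its neighbours in `S`; at the root this follows by
comparing the eigenvectors built from `σ` and `-σ`. So `x` has no zero on `S`
(`ne_zero_of_mem_branch`). The identity above then gives each non-root vertex `v` of `S` a neighbour
with strictly smaller `|x|`. In a finite tree such a neighbour must be the parent, by induction from
the leaves towards the root (`penultimate_lt`), so `|x|` increases strictly away from the root.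
-/

open SimpleGraph Finset Matrix
open scoped Classical

/-- The signless Laplacian matrix `Q(G) = D(G) + A(G)` of a simple graph. -/
noncomputable def Qmatrix {V : Type*} [Fintype V] (G : SimpleGraph V) : Matrix V V ℝ :=
  G.degMatrix ℝ + G.adjMatrix ℝ

/-- The least eigenvalue of the signless Laplacian of `G`. -/
noncomputable def qmin {V : Type*} [Fintype V] (G : SimpleGraph V) : ℝ :=
  sInf {q : ℝ | ∃ x : V → ℝ, x ≠ 0 ∧ Qmatrix G *ᵥ x = q • x}

/-- A first `Q`-eigenvector of `G`: an eigenvector of `Q(G)` for the least eigenvalue. -/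
def IsFirstQEigenvector {V : Type*} [Fintype V] (G : SimpleGraph V) (x : V → ℝ) : Prop :=
  x ≠ 0 ∧ Qmatrix G *ᵥ x = qmin G • x

/-- `S` (together with the root `u ∈ S`) induces a branch of `G` with root `u`:
no edge of `G` joins `S \ {u}` to the complement of `S`. -/
def IsBranch {V : Type*} (G : SimpleGraph V) (S : Set V) (u : V) : Prop :=
  u ∈ S ∧ ∀ a ∈ S, a ≠ u → ∀ b ∉ S, ¬ G.Adj a b

/-! ### The signless Laplacian and its least eigenvalue -/

section SignlessLaplacian

variable {V : Type*} [Fintype V] (G : SimpleGraph V)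

lemma Qmatrix_mulVec_apply (x : V → ℝ) (v : V) :
    (Qmatrix G *ᵥ x) v = G.degree v * x v + ∑ w ∈ G.neighborFinset v, x w := by
  simp [Qmatrix, add_mulVec, degMatrix_mulVec_apply, adjMatrix_mulVec_apply]

lemma Qmatrix_isHermitian : (Qmatrix G).IsHermitian :=
  (G.isHermitian_degMatrix ℝ).add (G.isHermitian_adjMatrix ℝ)

lemma dotProduct_Qmatrix_mulVec (x : V → ℝ) :
    x ⬝ᵥ (Qmatrix G *ᵥ x) =
      (∑ i : V, ∑ j : V, if G.Adj i j then (x i + x j) ^ 2 else 0) / 2 := by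
  simp_rw [Qmatrix, add_mulVec, dotProduct_add, dotProduct_mulVec_degMatrix,
    dotProduct_mulVec_adjMatrix, ← sum_add_distrib, degree_eq_sum_if_adj, sum_mul, ite_mul, one_mul,
    zero_mul, ← sum_add_distrib, ite_add_ite, add_zero]
  rw [← add_self_div_two (∑ x_1 : V, ∑ x_2 : V, _)]
  conv_lhs => enter [1, 2, 2, i, 2, j]; rw [if_congr (adj_comm G i j) rfl rfl]
  conv_lhs => enter [1, 2]; rw [Finset.sum_comm]
  simp_rw [← sum_add_distrib, ite_add_ite]
  congr 2 with i
  congr 2 with j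
  ring_nf

lemma dotProduct_Qmatrix_mulVec_nonneg (x : V → ℝ) : 0 ≤ x ⬝ᵥ (Qmatrix G *ᵥ x) := by
  rw [dotProduct_Qmatrix_mulVec]
  positivity

lemma dotProduct_self_pos_of_ne {x : V → ℝ} (hx : x ≠ 0) : 0 < x ⬝ᵥ x := by
  have h0 : 0 ≤ x ⬝ᵥ x := Finset.sum_nonneg fun i _ => mul_self_nonneg _
  exact lt_of_le_of_ne h0 fun h => hx (dotProduct_self_eq_zero.mp h.symm)

lemma eigenvalue_nonneg {q : ℝ} {x : V → ℝ} (hx : x ≠ 0) (h : Qmatrix G *ᵥ x = q • x) : 0 ≤ q := by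
  have h1 := dotProduct_Qmatrix_mulVec_nonneg G x
  rw [h, dotProduct_smul, smul_eq_mul] at h1
  exact nonneg_of_mul_nonneg_left h1 (dotProduct_self_pos_of_ne hx)

lemma qmin_le {q : ℝ} {x : V → ℝ} (hx : x ≠ 0) (h : Qmatrix G *ᵥ x = q • x) : qmin G ≤ q :=
  csInf_le ⟨0, by rintro q ⟨y, hy, hq⟩; exact eigenvalue_nonneg G hy hq⟩ ⟨x, hx, h⟩

/-- The Rayleigh bound for `qmin G`, in matrix form. -/
lemma posSemidef_Qmatrix_sub : (Qmatrix G - qmin G • (1 : Matrix V V ℝ)).PosSemidef := by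
  have hH : (Qmatrix G - qmin G • (1 : Matrix V V ℝ)).IsHermitian := by
    refine (Qmatrix_isHermitian G).sub ?_
    simp [Matrix.IsHermitian]
  rw [hH.posSemidef_iff_eigenvalues_nonneg]
  intro j
  have h1 := hH.mulVec_eigenvectorBasis j
  have hne : (hH.eigenvectorBasis j).ofLp ≠ 0 := by
    intro h
    exact hH.eigenvectorBasis.orthonormal.ne_zero j (by ext i; exact congrFun h i)
  have h2 := qmin_le G (q := hH.eigenvalues j + qmin G) hne (by
    rw [sub_mulVec, smul_mulVec, one_mulVec, sub_eq_iff_eq_add] at h1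
    rw [h1, add_smul])
  simpa using h2

/-- A vector attaining the Rayleigh bound is an eigenvector for `qmin G`. -/
lemma isEigen_of_dotProduct_le {y : V → ℝ}
    (h : y ⬝ᵥ (Qmatrix G *ᵥ y) ≤ qmin G * (y ⬝ᵥ y)) : Qmatrix G *ᵥ y = qmin G • y := by
  have hP := posSemidef_Qmatrix_sub G
  have hexp : y ⬝ᵥ ((Qmatrix G - qmin G • (1 : Matrix V V ℝ)) *ᵥ y)
      = y ⬝ᵥ (Qmatrix G *ᵥ y) - qmin G * (y ⬝ᵥ y) := by
    rw [sub_mulVec, smul_mulVec, one_mulVec, dotProduct_sub, dotProduct_smul, smul_eq_mul]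
  have h0 := hP.dotProduct_mulVec_nonneg y
  rw [star_trivial] at h0
  have hz := (hP.dotProduct_mulVec_zero_iff y).mp (by rw [star_trivial]; linarith)
  rwa [sub_mulVec, smul_mulVec, one_mulVec, sub_eq_zero] at hz

variable {G}

lemma qmin_pos (hG : G.Connected) (hnb : ¬ G.Colorable 2) {x : V → ℝ}
    (hx : IsFirstQEigenvector G x) : 0 < qmin G := by
  refine lt_of_le_of_ne (eigenvalue_nonneg G hx.1 hx.2) fun h0 => hnb ?_
  have hz := dotProduct_Qmatrix_mulVec G x
  rw [hx.2, ← h0, zero_smul, dotProduct_zero] at hz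
  have hs : ∑ i : V, ∑ j : V, (if G.Adj i j then (x i + x j) ^ 2 else 0) = 0 := by linarith
  have hadj : ∀ i j, G.Adj i j → x i = - x j := by
    intro i j hij
    rw [Finset.sum_eq_zero_iff_of_nonneg (fun i _ => by positivity)] at hs
    have h1 := hs i (Finset.mem_univ _)
    rw [Finset.sum_eq_zero_iff_of_nonneg (fun i _ => by positivity)] at h1
    have h2 := h1 j (Finset.mem_univ _)
    rw [if_pos hij] at h2
    linarith [pow_eq_zero_iff (two_ne_zero) |>.mp h2]
  have habs : ∀ i j, |x i| = |x j| := by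
    intro i j
    obtain ⟨W⟩ := hG.preconnected i j
    induction W with
    | nil => rfl
    | cons h _ ih => rw [← ih, hadj _ _ h, abs_neg]
  have hne : ∀ i, x i ≠ 0 := by
    intro i hi
    refine hx.1 (funext fun j => ?_)
    simpa [hi] using habs j i
  refine ⟨Coloring.mk (fun v => if 0 < x v then (0 : Fin 2) else 1) ?_⟩
  intro v w hvw
  have h1 := hadj v w hvw
  rcases lt_or_gt_of_ne (hne w) with h | h
  · rw [if_pos (by linarith), if_neg (by linarith)]; decide
  · rw [if_neg (by linarith), if_pos h]; decide

end SignlessLaplacian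

/-! ### Absolute values of a first eigenvector on a tree branch -/

section Branch

variable {V : Type*}

/-- A proper 2-colouring of `G[S]` with colours `1` and `-1`; the values are `±1` off `S` too. -/
def IsSignColouring (G : SimpleGraph V) (S : Set V) (σ : V → ℝ) : Prop :=
  (∀ v, σ v = 1 ∨ σ v = -1) ∧ ∀ v ∈ S, ∀ w ∈ S, G.Adj v w → σ w = - σ v

lemma IsSignColouring.neg {G : SimpleGraph V} {S : Set V} {σ : V → ℝ}
    (h : IsSignColouring G S σ) : IsSignColouring G S (fun v => - σ v) := by
  refine ⟨fun v => ?_, fun v hv w hw hvw => by simp [h.2 v hv w hw hvw]⟩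
  rcases h.1 v with h | h <;> simp [h]

lemma exists_isSignColouring {G : SimpleGraph V} {S : Set V} (h : (G.induce S).Colorable 2) :
    ∃ σ, IsSignColouring G S σ := by
  obtain ⟨c⟩ := h
  refine ⟨fun v => if hv : v ∈ S then (if c ⟨v, hv⟩ = 0 then 1 else -1) else 1, ?_, ?_⟩
  · intro v
    dsimp only
    split_ifs <;> simp
  · intro v hv w hw hvw
    have h1 : c ⟨v, hv⟩ ≠ c ⟨w, hw⟩ := c.valid (by simpa using hvw)
    simp only [dif_pos hv, dif_pos hw]
    generalize c ⟨v, hv⟩ = a at *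
    generalize c ⟨w, hw⟩ = b at *
    fin_cases a <;> fin_cases b <;> simp at *

lemma exists_isSignColouring_root {G : SimpleGraph V} {S : Set V}
    (h : (G.induce S).Colorable 2) (u : V) (x : V → ℝ) :
    ∃ σ, IsSignColouring G S σ ∧ σ u * |x u| = x u := by
  obtain ⟨σ, hσ⟩ := exists_isSignColouring h
  by_cases hs : σ u * |x u| = x u
  · exact ⟨σ, hσ, hs⟩
  · refine ⟨_, hσ.neg, ?_⟩
    rcases hσ.1 u with h1 | h1 <;> rcases abs_choice (x u) with h2 | h2 <;>
      rw [h1, h2] at hs <;> simp [h1, h2] at hs ⊢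

/-- The vector `x` with its restriction to `S` replaced by `σ * |x|`. -/
noncomputable def switch (S : Set V) (σ x : V → ℝ) : V → ℝ :=
  fun v => if v ∈ S then σ v * |x v| else x v

variable [Fintype V] {G : SimpleGraph V} {S : Set V} {u : V} {σ x : V → ℝ}

lemma isEigen_switch (hbr : IsBranch G S u) (hσ : IsSignColouring G S σ)
    (hx : IsFirstQEigenvector G x) (hu : σ u * |x u| = x u) :
    Qmatrix G *ᵥ switch S σ x = qmin G • switch S σ x := by
  have hsq : ∀ v, σ v * σ v = 1 := fun v => by rcases hσ.1 v with h | h <;> simp [h]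
  have hroot : switch S σ x u = x u := by simp [switch, hu]
  -- Across the boundary of the branch only the root is involved, where `x` is unchanged.
  have hcross : ∀ v ∈ S, ∀ w ∉ S, G.Adj v w → switch S σ x v = x v := by
    intro v hv w hw hvw
    by_cases hvu : v = u
    · rw [hvu, hroot]
    · exact absurd hvw (hbr.2 v hv hvu w hw)
  have hout : ∀ v ∉ S, switch S σ x v = x v := fun v hv => by simp [switch, hv]
  apply isEigen_of_dotProduct_le
  have hnorm : switch S σ x ⬝ᵥ switch S σ x = x ⬝ᵥ x := by
    refine Finset.sum_congr rfl fun v _ => ?_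
    by_cases hv : v ∈ S
    · simp only [switch, if_pos hv]
      calc σ v * |x v| * (σ v * |x v|) = (σ v * σ v) * (|x v| * |x v|) := by ring
        _ = x v * x v := by rw [hsq, one_mul, abs_mul_abs_self]
    · rw [hout v hv]
  have hform : qmin G * (x ⬝ᵥ x) = x ⬝ᵥ (Qmatrix G *ᵥ x) := by
    rw [hx.2, dotProduct_smul, smul_eq_mul]
  rw [hnorm, hform, dotProduct_Qmatrix_mulVec, dotProduct_Qmatrix_mulVec]
  refine div_le_div_of_nonneg_right ?_ (by norm_num)
  refine Finset.sum_le_sum fun v _ => Finset.sum_le_sum fun w _ => ?_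
  split_ifs with hvw
  swap
  · exact le_rfl
  by_cases hv : v ∈ S <;> by_cases hw : w ∈ S
  · have h1 := hσ.2 v hv w hw hvw
    simp only [switch, if_pos hv, if_pos hw, h1]
    have h2 : (σ v * |x v| + -σ v * |x w|) ^ 2 = (|x v| - |x w|) ^ 2 := by
      linear_combination (|x v| - |x w|) ^ 2 * hsq v
    rw [h2, sq_le_sq]
    simpa using abs_abs_sub_abs_le (x v) (-x w)
  · rw [hcross v hv w hw hvw, hout w hw]
  · rw [hcross w hw v hv hvw.symm, hout v hv]
  · rw [hout v hv, hout w hw]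

/-- The eigenvalue equation, transported to absolute values, at the non-root vertices of `S`. -/
lemma sum_abs_sub_eq (hbr : IsBranch G S u) (hc : (G.induce S).Colorable 2)
    (hx : IsFirstQEigenvector G x) {v : V} (hv : v ∈ S) (hvu : v ≠ u) :
    ∑ w ∈ G.neighborFinset v, (|x v| - |x w|) = qmin G * |x v| := by
  obtain ⟨σ, hσ, hu⟩ := exists_isSignColouring_root hc u x
  have h := congrFun (isEigen_switch hbr hσ hx hu) v
  rw [Qmatrix_mulVec_apply, Pi.smul_apply, smul_eq_mul] at h
  have hsum : ∑ w ∈ G.neighborFinset v, switch S σ x w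
      = - σ v * ∑ w ∈ G.neighborFinset v, |x w| := by
    rw [Finset.mul_sum]
    refine Finset.sum_congr rfl fun w hw => ?_
    rw [mem_neighborFinset] at hw
    have hwS : w ∈ S := by
      by_contra hwS
      exact hbr.2 v hv hvu w hwS hw
    simp only [switch, if_pos hwS, hσ.2 v hv w hwS hw]
  rw [hsum] at h
  simp only [switch, if_pos hv] at h
  rw [Finset.sum_sub_distrib, Finset.sum_const, card_neighborFinset_eq_degree, nsmul_eq_mul]
  rcases hσ.1 v with h1 | h1 <;> rw [h1] at h <;> linarith

/-- Zeros of `x` propagate along the edges of the branch. -/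
lemma eq_zero_of_adj (hbr : IsBranch G S u) (hc : (G.induce S).Colorable 2)
    (hx : IsFirstQEigenvector G x) {v w : V} (hv : v ∈ S) (hw : w ∈ S) (hvw : G.Adj v w)
    (h0 : x v = 0) : x w = 0 := by
  by_cases hvu : v = u
  · subst hvu
    obtain ⟨σ, hσ⟩ := exists_isSignColouring hc
    have h1 := congrFun (isEigen_switch hbr hσ hx (by simp [h0])) v
    have h2 := congrFun (isEigen_switch hbr hσ.neg hx (by simp [h0])) v
    have hz : ∀ τ : V → ℝ, switch S τ x v = 0 := fun τ => by simp [switch, h0]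
    rw [Qmatrix_mulVec_apply, Pi.smul_apply, hz, smul_zero, mul_zero, zero_add] at h1 h2
    -- The difference of the two eigenvectors is supported on `S` and has constant sign
    -- on the neighbours of the root.
    have h3 : ∑ w ∈ G.neighborFinset v, (if w ∈ S then |x w| else 0) = 0 := by
      have h4 : ∑ w ∈ G.neighborFinset v,
          (switch S σ x w - switch S (fun v => - σ v) x w)
          = (-2 * σ v) * ∑ w ∈ G.neighborFinset v, (if w ∈ S then |x w| else 0) := by
        rw [Finset.mul_sum]
        refine Finset.sum_congr rfl fun w hw => ?_
        rw [mem_neighborFinset] at hw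
        by_cases hwS : w ∈ S
        · simp only [switch, if_pos hwS, hσ.2 v hv w hwS hw]; ring
        · simp [switch, hwS]
      rw [Finset.sum_sub_distrib, h1, h2, sub_zero] at h4
      rcases hσ.1 v with h5 | h5 <;> rw [h5] at h4 <;> linarith
    rw [Finset.sum_eq_zero_iff_of_nonneg (fun w _ => by split_ifs <;> simp)] at h3
    simpa [hw] using h3 w ((mem_neighborFinset _ _ _).mpr hvw)
  · have h := sum_abs_sub_eq hbr hc hx hv hvu
    simp only [h0, abs_zero, zero_sub, mul_zero, Finset.sum_neg_distrib, neg_eq_zero] at h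
    rw [Finset.sum_eq_zero_iff_of_nonneg (fun w _ => abs_nonneg _)] at h
    simpa using h w ((mem_neighborFinset _ _ _).mpr hvw)

lemma ne_zero_of_mem_branch (hbr : IsBranch G S u) (htree : (G.induce S).IsTree)
    (hx : IsFirstQEigenvector G x) (hnz : ∃ w ∈ S, x w ≠ 0) {v : V} (hv : v ∈ S) : x v ≠ 0 := by
  obtain ⟨w, hw, hxw⟩ := hnz
  have key : ∀ {a b : S}, (G.induce S).Walk a b → x a = 0 → x b = 0 := by
    intro a b W
    induction W with
    | nil => exact id
    | cons h _ ih =>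
      exact fun h0 => ih (eq_zero_of_adj hbr htree.colorable_two hx (Subtype.property _)
        (Subtype.property _) (by simpa using h) h0)
  obtain ⟨W⟩ := htree.connected.preconnected ⟨v, hv⟩ ⟨w, hw⟩
  exact fun h0 => hxw (key W h0)

end Branch

/-! ### Monotonicity along paths of a rooted tree -/

section Tree

variable {α : Type*} [Fintype α] {T : SimpleGraph α} {u : α} {z : α → ℝ}

/-- If every vertex other than the root `u` has a neighbour with a smaller value of `z`, then this
neighbour is the parent: by induction from the leaves, `z` is larger at all the children. -/
lemma penultimate_lt (hT : T.IsAcyclic) (hz : ∀ v, v ≠ u → ∃ w, T.Adj v w ∧ z w < z v)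
    {v : α} (W : T.Walk u v) (hW : W.IsPath) (hvu : v ≠ u) : z W.penultimate < z v := by
  obtain ⟨w, hvw, hlt⟩ := hz v hvu
  by_cases hmem : w ∈ W.support
  · rwa [← hT.eq_penultimate_of_adj_end hW hvw hmem]
  · have hP : (W.concat hvw).IsPath := hW.concat hmem hvw
    have hlen := hP.length_lt
    have hwu : w ≠ u := fun h => hmem (h ▸ W.start_mem_support)
    have h := penultimate_lt hT hz (W.concat hvw) hP hwu
    rw [Walk.penultimate_concat] at h
    exact absurd h hlt.not_gt
termination_by Fintype.card α - W.length
decreasing_by have := W.length_concat hvw; omega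

lemma lt_of_mem_path (hT : T.IsAcyclic) (hz : ∀ v, v ≠ u → ∃ w, T.Adj v w ∧ z w < z v)
    {v : α} (W : T.Walk u v) (hW : W.IsPath) {a : α} (ha : a ∈ W.support) (hav : a ≠ v) :
    z a < z v := by
  by_cases hvu : v = u
  · subst hvu
    rw [(Walk.isPath_iff_nil.mp hW).eq_nil] at ha
    exact absurd (by simpa using ha) hav
  · have hnil : ¬ W.Nil := Walk.not_nil_of_ne (Ne.symm hvu)
    have hlt := penultimate_lt hT hz W hW hvu
    rw [← Walk.support_dropLast_concat hnil, List.mem_append, List.mem_singleton] at ha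
    by_cases hap : a = W.penultimate
    · rwa [hap]
    · exact (lt_of_mem_path hT hz W.dropLast hW.dropLast (ha.resolve_right hav) hap).trans hlt
termination_by W.length
decreasing_by have := Walk.length_dropLast_add_one hnil; omega

end Tree

theorem stmt_2 {V : Type*} [Fintype V] (G : SimpleGraph V) (hG : G.Connected)
    (hnb : ¬ G.Colorable 2)
    (S : Set V) (u : V) (hbr : IsBranch G S u)
    (htree : (G.induce S).IsTree)
    (x : V → ℝ) (hx : IsFirstQEigenvector G x)
    (hnz : ∃ w ∈ S, x w ≠ 0)
    (p q : S) (hne : p ≠ q)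
    (hq : ∀ W : (G.induce S).Walk ⟨u, hbr.1⟩ p, W.IsPath → q ∈ W.support) :
    |x q| < |x p| := by
  obtain ⟨W, hW, -⟩ := htree.existsUnique_path ⟨u, hbr.1⟩ p
  refine lt_of_mem_path (z := fun v : S => |x v|) htree.isAcyclic ?_ W hW (hq W hW) hne.symm
  intro v hvu
  have hvu' : (v : V) ≠ u := fun h => hvu (Subtype.ext h)
  have hpos : 0 < ∑ w ∈ G.neighborFinset v, (|x v| - |x w|) := by
    rw [sum_abs_sub_eq hbr htree.colorable_two hx v.2 hvu']
    exact mul_pos (qmin_pos hG hnb hx)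
      (abs_pos.mpr (ne_zero_of_mem_branch hbr htree hx hnz v.2))
  obtain ⟨w, hw, hlt⟩ := Finset.exists_lt_of_sum_lt (f := fun _ => (0 : ℝ)) 
    (lt_of_eq_of_lt Finset.sum_const_zero hpos)
  rw [mem_neighborFinset] at hw
  have hwS : w ∈ S := by
    by_contra hwS
    exact hbr.2 v v.2 hvu' w hwS hw
  exact ⟨⟨w, hwS⟩, by simpa using hw, by simpa using hlt⟩
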